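/- Let N ≥ 1 be an integer, p a real parameter, and d ≥ 0 an integer. Define the real polynomial q(x) = Σ_{0 ≤ k,j ≤ d} [(−d)_j·(−d)_k·(p−1)^{d−k}·p^{d−j}/(j!·k!)] · (−N−d−1)_{d−j}·(−N−d−1)_{d−k} · K_{N+k+j+1}(x+k+1;p,N+k+j+1). Then, as an identity of real polynomials, p·q(x) + (1−p)·q(x−1) = K_d(x−N−1;p,−N−2) · K_{N+d+1}(x;p,N). (Thus q is the exceptional Krawtchouk polynomial K̂_{N+d+1}^{(2,d)}, the added state of the type-2 family, and the backward operator B^{(2,d)} maps it to K_{N+d+1}.) -/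

import Mathlib

open Polynomial

/-- Pochhammer symbol `(c)_k = c (c+1) ⋯ (c+k−1)`. -/
noncomputable def poch (c : ℝ) (k : ℕ) : ℝ := ∏ i ∈ Finset.range k, (c + i)

/-- The monic Krawtchouk polynomial
`K_n(x;p,a) = Σ_{j=0}^{n} ((−n)_j (−a+j)_{n−j} / j!) p^{n−j} (−x)_j`,
where `(−x)_j = Π_{i=0}^{j−1} (i − x)` as a polynomial in `x`. -/
noncomputable def kraw (n : ℕ) (p a : ℝ) : Polynomial ℝ :=
  ∑ j ∈ Finset.range (n + 1),
    Polynomial.C (poch (-(n : ℝ)) j * poch (-a + j) (n - j) / (Nat.factorial j) * p ^ (n - j)) *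
      ∏ i ∈ Finset.range j, (Polynomial.C (i : ℝ) - Polynomial.X)

/- The generating function `∑ₙ Kₙ(x;p,a) tⁿ / n! = (1 + (1-p)t)ˣ (1 - pt)ᵃ⁻ˣ` accounts for the two
identities that drive the proof: the reflection `x ↦ a - x`, `p ↦ 1 - p`, and the contiguous
relation `p Kₙ(x+1;p,a+1) + (1-p) Kₙ(x;p,a+1) = Kₙ(x;p,a)`. Since moreover `Kₙ(x;p,n-1)` is the
falling factorial of length `n`, the backward operator turns each summand of `q` into a falling
factorial of length `N+k+j+1` based at `x+k`, which splits into consecutive blocks of lengths `k`,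
`N+1` and `j`. The double sum is then a product of an expansion of `K_d(x-N-1;p,-N-2)` in falling
factorials, a second expansion of the same polynomial in rising factorials (its reflection), and the
factor `x(x-1)⋯(x-N)`; one of the expansions together with this factor gives `K_{N+d+1}(x;p,N)`. -/

theorem neg_one_pow_sq {R : Type*} [Monoid R] [HasDistribNeg R] (n : ℕ) :
    ((-1 : R) ^ n) ^ 2 = 1 := by
  rw [pow_right_comm, neg_one_sq, one_pow]

theorem polynomial_eq_of_eval_add_one_sub_eq {R : Type*} [CommRing R] [IsDomain R] [CharZero R]
    {f g : R[X]} (zero : f.eval 0 = g.eval 0)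
    (diff : ∀ x, f.eval (x + 1) - f.eval x = g.eval (x + 1) - g.eval x) : f = g := by
  have eval_natCast : ∀ m : ℕ, f.eval (m : R) = g.eval (m : R) := by
    intro m
    induction m with
    | zero => simpa using zero
    | succ m ih =>
      push_cast
      linear_combination diff m + ih
  exact eq_of_infinite_eval_eq f g
    (Set.infinite_of_injective_forall_mem Nat.cast_injective eval_natCast)

section FallingFactorial

variable {R : Type*} [CommRing R]

theorem descPochhammer_eval_add (m n : ℕ) (x : R) :
    (descPochhammer R (m + n)).eval x =
      (descPochhammer R m).eval x * (descPochhammer R n).eval (x - m) := by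
  simp [← descPochhammer_mul]

theorem descPochhammer_succ_eval_add_one (n : ℕ) (x : R) :
    (descPochhammer R (n + 1)).eval (x + 1) = (x + 1) * (descPochhammer R n).eval x := by
  simp [descPochhammer_succ_left]

theorem descPochhammer_succ_eval_add_one_sub (n : ℕ) (x : R) :
    (descPochhammer R (n + 1)).eval (x + 1) - (descPochhammer R (n + 1)).eval x =
      (n + 1) * (descPochhammer R n).eval x := by
  rw [descPochhammer_succ_eval_add_one, descPochhammer_succ_eval]
  ring

theorem factorial_mul_descPochhammer_eval_neg_add_one (m n : ℕ) :
    (m.factorial : R) * (descPochhammer R n).eval (-((m : R) + 1)) =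
      (-1) ^ n * ((m + n).factorial : R) := by
  induction n with
  | zero => simp
  | succ n ih =>
    rw [descPochhammer_succ_eval, ← add_assoc, Nat.factorial_succ]
    push_cast
    linear_combination (-((m : R) + 1) - n) * ih

end FallingFactorial

theorem poch_eq_ascPochhammer_eval (c : ℝ) (k : ℕ) : poch c k = (ascPochhammer ℝ k).eval c := by
  induction k with
  | zero => simp [poch]
  | succ k ih => rw [ascPochhammer_succ_eval, ← ih, poch, Finset.prod_range_succ, ← poch]

theorem poch_neg (x : ℝ) (k : ℕ) : poch (-x) k = (-1) ^ k * (descPochhammer ℝ k).eval x := by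
  rw [poch_eq_ascPochhammer_eval, ascPochhammer_eval_neg_eq_descPochhammer]

theorem poch_sub_add_one (x : ℝ) (k : ℕ) : poch (x - k + 1) k = (descPochhammer ℝ k).eval x := by
  rw [poch_eq_ascPochhammer_eval, descPochhammer_eval_eq_ascPochhammer]

theorem descPochhammer_eval_add_natCast (k m : ℕ) (x : ℝ) :
    (descPochhammer ℝ (k + m)).eval (x + k) =
      poch (x + 1) k * (descPochhammer ℝ m).eval x := by
  rw [descPochhammer_eval_add, ← poch_sub_add_one, add_sub_cancel_right]

theorem poch_neg_natCast (n j : ℕ) :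
    poch (-(n : ℝ)) j = (-1) ^ j * (j.factorial * n.choose j) := by
  rw [poch_neg, descPochhammer_eval_eq_descFactorial, Nat.descFactorial_eq_factorial_mul_choose,
    Nat.cast_mul]

/-- The coefficient of the falling factorial `x (x-1) ⋯ (x-j+1)` in `K_n(x;p,a)`. The factor
`(-a+j)_{n-j}` of the definition of `kraw` is written as a falling factorial of `a-j`, its sign
being absorbed in `(-p)^{n-j}`. -/
noncomputable def krawCoeff (n : ℕ) (p a : ℝ) (j : ℕ) : ℝ :=
  n.choose j * (-p) ^ (n - j) * (descPochhammer ℝ (n - j)).eval (a - j)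

section Krawtchouk

variable (n : ℕ) (p a x : ℝ)

theorem kraw_eval_eq_sum_descPochhammer :
    (kraw n p a).eval x =
      ∑ j ∈ Finset.range (n + 1), krawCoeff n p a j * (descPochhammer ℝ j).eval x := by
  rw [kraw, eval_finsetSum]
  refine Finset.sum_congr rfl fun j _ ↦ ?_
  have prod_eval : eval x (∏ i ∈ Finset.range j, (C (i : ℝ) - X)) =
      (-1) ^ j * (descPochhammer ℝ j).eval x := by
    rw [← poch_neg, poch, eval_prod]
    simp [sub_eq_neg_add]
  rw [eval_mul, eval_C, prod_eval, poch_neg_natCast, neg_add_eq_sub, ← neg_sub a, poch_neg,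
    krawCoeff, neg_pow p]
  field_simp
  rw [neg_one_pow_sq, one_mul]

theorem succ_mul_krawCoeff_succ (j : ℕ) :
    (j + 1) * krawCoeff (n + 1) p (a + 1) (j + 1) = (n + 1) * krawCoeff n p a j := by
  have choose_succ : ((n : ℝ) + 1) * n.choose j = (n + 1).choose (j + 1) * (j + 1) := by
    exact_mod_cast Nat.add_one_mul_choose_eq n j
  rw [krawCoeff, krawCoeff, Nat.add_sub_add_right, Nat.cast_succ, add_sub_add_right_eq_sub]
  linear_combination
    (-((-p) ^ (n - j) * (descPochhammer ℝ (n - j)).eval (a - j))) * choose_succ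

theorem krawCoeff_succ_add_one_sub {j : ℕ} (hj : j ≤ n + 1) :
    krawCoeff (n + 1) p (a + 1) j - krawCoeff (n + 1) p a j =
      -(p * ((n + 1) * krawCoeff n p a j)) := by
  obtain rfl | hj := hj.eq_or_lt
  · simp [krawCoeff]
  · obtain ⟨e, rfl⟩ := Nat.exists_eq_add_of_le (Nat.lt_succ_iff.mp hj)
    have choose_succ : ((j + e : ℕ) + 1 : ℝ) * (j + e).choose j =
        (j + e + 1).choose j * (e + 1) := by
      have absorption := Nat.add_one_mul_choose_eq (j + e) e
      rw [Nat.choose_symm_add, Nat.choose_symm_of_eq_add (show j + e + 1 = j + (e + 1) by ring)]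
      exact_mod_cast absorption
    have diff := descPochhammer_succ_eval_add_one_sub e (a - j)
    rw [sub_add_eq_add_sub] at diff
    rw [krawCoeff, krawCoeff, krawCoeff, add_assoc j e 1, Nat.add_sub_cancel_left,
      Nat.add_sub_cancel_left, ← add_assoc j e 1, pow_succ]
    linear_combination (j + e + 1).choose j * (-p) ^ e * (-p) * diff +
      p * (-p) ^ e * (descPochhammer ℝ e).eval (a - j) * choose_succ

theorem kraw_succ_eval_add_one_sub :
    (kraw (n + 1) p (a + 1)).eval (x + 1) - (kraw (n + 1) p (a + 1)).eval x =
      (n + 1) * (kraw n p a).eval x := by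
  simp only [kraw_eval_eq_sum_descPochhammer]
  rw [← Finset.sum_sub_distrib, Finset.sum_range_succ', Finset.mul_sum]
  simp only [descPochhammer_zero, eval_one, sub_self, add_zero]
  refine Finset.sum_congr rfl fun j _ ↦ ?_
  rw [← mul_sub, descPochhammer_succ_eval_add_one_sub]
  linear_combination (descPochhammer ℝ j).eval x * succ_mul_krawCoeff_succ n p a j

theorem kraw_succ_eval_sub_add_one :
    (kraw (n + 1) p (a + 1)).eval x - (kraw (n + 1) p a).eval x =
      -(p * ((n + 1) * (kraw n p a).eval x)) := by
  have extend : (kraw n p a).eval x =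
      ∑ j ∈ Finset.range (n + 1 + 1), krawCoeff n p a j * (descPochhammer ℝ j).eval x := by
    rw [Finset.sum_range_succ, ← kraw_eval_eq_sum_descPochhammer]
    simp [krawCoeff]
  rw [extend, kraw_eval_eq_sum_descPochhammer, kraw_eval_eq_sum_descPochhammer,
    ← Finset.sum_sub_distrib, Finset.mul_sum, Finset.mul_sum, ← Finset.sum_neg_distrib]
  refine Finset.sum_congr rfl fun j hj ↦ ?_
  linear_combination (descPochhammer ℝ j).eval x *
    krawCoeff_succ_add_one_sub n p a (Finset.mem_range_succ_iff.mp hj)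

theorem kraw_contiguous :
    p * (kraw n p (a + 1)).eval (x + 1) + (1 - p) * (kraw n p (a + 1)).eval x =
      (kraw n p a).eval x := by
  cases n with
  | zero => simp [kraw_eval_eq_sum_descPochhammer, krawCoeff]
  | succ n =>
    linear_combination p * kraw_succ_eval_add_one_sub n p a x + kraw_succ_eval_sub_add_one n p a x

theorem kraw_eval_zero :
    (kraw n p a).eval 0 = (-p) ^ n * (descPochhammer ℝ n).eval a := by
  rw [kraw_eval_eq_sum_descPochhammer, Finset.sum_range_succ']
  simp [krawCoeff]

theorem kraw_eval_self :
    (kraw n p a).eval a = (1 - p) ^ n * (descPochhammer ℝ n).eval a := by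
  rw [kraw_eval_eq_sum_descPochhammer, sub_eq_add_neg, add_pow, Finset.sum_mul]
  refine Finset.sum_congr rfl fun j hj ↦ ?_
  have split := descPochhammer_eval_add j (n - j) a
  rw [Nat.add_sub_cancel' (Finset.mem_range_succ_iff.mp hj)] at split
  rw [split, krawCoeff]
  ring

theorem kraw_eval_reflect :
    (kraw n (1 - p) a).eval (a - x) = (-1) ^ n * (kraw n p a).eval x := by
  induction n generalizing a x with
  | zero => simp [kraw_eval_eq_sum_descPochhammer, krawCoeff]
  | succ n ih =>
    suffices h : (kraw (n + 1) (1 - p) a).comp (C a - X) = C ((-1) ^ (n + 1)) * kraw (n + 1) p a by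
      simpa using congrArg (eval x) h
    refine polynomial_eq_of_eval_add_one_sub_eq ?_ fun y ↦ ?_
    · simp only [eval_comp, eval_sub, eval_C, eval_X, sub_zero, eval_mul]
      rw [kraw_eval_self, kraw_eval_zero, sub_sub_cancel, neg_pow p]
      linear_combination
        (-(p ^ (n + 1) * (descPochhammer ℝ (n + 1)).eval a)) * neg_one_pow_sq (R := ℝ) (n + 1)
    · have lower := kraw_succ_eval_add_one_sub n p (a - 1) y
      have lower_reflected := kraw_succ_eval_add_one_sub n (1 - p) (a - 1) (a - 1 - y)
      rw [ih, sub_add_cancel, show a - 1 - y + 1 = a - y by ring] at lower_reflected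
      rw [sub_add_cancel] at lower
      simp only [eval_comp, eval_sub, eval_C, eval_X, eval_mul]
      rw [show a - (y + 1) = a - 1 - y by ring]
      linear_combination (-1) ^ n * lower - lower_reflected

theorem kraw_eval_eq_sum_poch :
    (kraw n p a).eval x =
      ∑ k ∈ Finset.range (n + 1), krawCoeff n (p - 1) a k * poch (x - a) k := by
  have reflect := kraw_eval_reflect n (1 - p) a (a - x)
  rw [sub_sub_cancel, sub_sub_cancel, kraw_eval_eq_sum_descPochhammer n (1 - p),
    Finset.mul_sum] at reflect
  rw [reflect]
  refine Finset.sum_congr rfl fun k hk ↦ ?_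
  have sign : (-1 : ℝ) ^ n = (-1) ^ (n - k) * (-1) ^ k := by
    rw [← pow_add, Nat.sub_add_cancel (Finset.mem_range_succ_iff.mp hk)]
  rw [← neg_sub a x, poch_neg, krawCoeff, krawCoeff, sign, neg_sub p 1, neg_pow (1 - p)]
  linear_combination (n.choose k * (1 - p) ^ (n - k) * (descPochhammer ℝ (n - k)).eval (a - k) *
    (-1) ^ k * (descPochhammer ℝ k).eval (a - x)) * neg_one_pow_sq (R := ℝ) (n - k)

theorem krawCoeff_eq_zero_of_lt {m j : ℕ} (d : ℕ) (hj : j < m) :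
    krawCoeff (m + d) p (m - 1) j = 0 := by
  have vanish : (descPochhammer ℝ (m + d - j)).eval ((m - 1 - j : ℕ) : ℝ) = 0 :=
    descPochhammer_eval_coe_nat_of_lt (by omega)
  rw [Nat.sub_sub, Nat.cast_sub (by omega)] at vanish
  push_cast at vanish
  rw [krawCoeff, sub_sub, vanish, mul_zero]

theorem krawCoeff_add_left {d i : ℕ} (m : ℕ) (hi : i ≤ d) :
    krawCoeff (m + d) p (m - 1) (m + i) = krawCoeff d p (-m - 1) i := by
  obtain ⟨e, rfl⟩ := Nat.exists_eq_add_of_le hi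
  have desc_left := factorial_mul_descPochhammer_eval_neg_add_one (R := ℝ) i e
  have desc_right := factorial_mul_descPochhammer_eval_neg_add_one (R := ℝ) (m + i) e
  have choose_left : ((m + i + e).choose (m + i) : ℝ) * (m + i).factorial * e.factorial =
      (m + i + e).factorial := by
    rw [Nat.choose_symm_add]
    exact_mod_cast Nat.add_choose_mul_factorial_mul_factorial (m + i) e
  have choose_right : ((i + e).choose i : ℝ) * i.factorial * e.factorial = (i + e).factorial := by
    rw [Nat.choose_symm_add]
    exact_mod_cast Nat.add_choose_mul_factorial_mul_factorial i e
  have factorials_ne_zero : (i.factorial * e.factorial * (m + i).factorial : ℝ) ≠ 0 := by positivity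
  have choose_mul_desc :
      ((m + i + e).choose (m + i) : ℝ) * (descPochhammer ℝ e).eval (-((i : ℝ) + 1)) =
        (i + e).choose i * (descPochhammer ℝ e).eval (-(((m + i : ℕ) : ℝ) + 1)) := by
    apply mul_right_cancel₀ factorials_ne_zero
    linear_combination
      ((m + i + e).choose (m + i) : ℝ) * (m + i).factorial * e.factorial * desc_left
      + (-1) ^ e * (i + e).factorial * choose_left
      - ((i + e).choose i : ℝ) * i.factorial * e.factorial * desc_right
      - (-1) ^ e * (m + i + e).factorial * choose_right
  rw [krawCoeff, krawCoeff, ← add_assoc, Nat.add_sub_cancel_left, Nat.add_sub_cancel_left,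
    show (m : ℝ) - 1 - (m + i : ℕ) = -(i + 1) by push_cast; ring,
    show -(m : ℝ) - 1 - i = -((m + i : ℕ) + 1) by push_cast; ring]
  linear_combination (-p) ^ e * choose_mul_desc

theorem kraw_add_eval_eq_mul (m d : ℕ) :
    (kraw (m + d) p (m - 1)).eval x =
      (descPochhammer ℝ m).eval x * (kraw d p (-m - 1)).eval (x - m) := by
  rw [kraw_eval_eq_sum_descPochhammer, kraw_eval_eq_sum_descPochhammer, add_assoc,
    Finset.sum_range_add, Finset.sum_eq_zero, zero_add, Finset.mul_sum]
  · refine Finset.sum_congr rfl fun i hi ↦ ?_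
    rw [krawCoeff_add_left p m (Finset.mem_range_succ_iff.mp hi), descPochhammer_eval_add]
    ring
  · intro j hj
    rw [krawCoeff_eq_zero_of_lt p d (Finset.mem_range.mp hj), zero_mul]

theorem kraw_sub_one_eval :
    (kraw n p (n - 1)).eval x = (descPochhammer ℝ n).eval x := by
  simpa [kraw_eval_eq_sum_descPochhammer 0, krawCoeff] using kraw_add_eval_eq_mul p x n 0

theorem kraw_natCast_backward :
    p * (kraw n p n).eval (x + 1) + (1 - p) * (kraw n p n).eval x =
      (descPochhammer ℝ n).eval x := by
  simpa only [sub_add_cancel, kraw_sub_one_eval] using kraw_contiguous n p (n - 1) x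

theorem poch_neg_natCast_mul_poch {n j : ℕ} (hj : j ≤ n) :
    poch (-(n : ℝ)) j * p ^ (n - j) / j.factorial * poch (a - n + 1) (n - j) =
      (-1) ^ n * krawCoeff n p a j := by
  have sign : (-1 : ℝ) ^ n = (-1) ^ j * (-1) ^ (n - j) := by
    rw [← pow_add, Nat.add_sub_cancel' hj]
  have reverse := poch_sub_add_one (a - j) (n - j)
  rw [Nat.cast_sub hj, sub_sub_sub_cancel_right] at reverse
  rw [reverse, poch_neg_natCast, krawCoeff, sign, neg_pow p]
  field_simp
  rw [neg_one_pow_sq, mul_one]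

end Krawtchouk

/-- The polynomial `q` of the theorem, that is, the added state `K̂_{N+d+1}^{(2,d)}` of the type-2
exceptional family. -/
noncomputable def krawAddedState (N d : ℕ) (p : ℝ) : ℝ[X] :=
  ∑ k ∈ Finset.range (d + 1), ∑ j ∈ Finset.range (d + 1),
    C (poch (-(d : ℝ)) j * poch (-(d : ℝ)) k * (p - 1) ^ (d - k) *
        p ^ (d - j) / ((j.factorial : ℝ) * (k.factorial : ℝ)) *
        poch (-(N : ℝ) - d - 1) (d - j) * poch (-(N : ℝ) - d - 1) (d - k)) *
      (kraw (N + k + j + 1) p ((N : ℝ) + k + j + 1)).comp (X + C ((k : ℝ) + 1))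

theorem krawAddedState_eq_sum_krawCoeff (N d : ℕ) (p : ℝ) :
    krawAddedState N d p =
      ∑ k ∈ Finset.range (d + 1), ∑ j ∈ Finset.range (d + 1),
        C (krawCoeff d p (-N - 2) j * krawCoeff d (p - 1) (-N - 2) k) *
          (kraw (N + k + j + 1) p (N + k + j + 1)).comp (X + C ((k : ℝ) + 1)) := by
  refine Finset.sum_congr rfl fun k hk ↦ Finset.sum_congr rfl fun j hj ↦ ?_
  have coeff_k := poch_neg_natCast_mul_poch (p - 1) (-N - 2) (Finset.mem_range_succ_iff.mp hk)
  have coeff_j := poch_neg_natCast_mul_poch p (-N - 2) (Finset.mem_range_succ_iff.mp hj)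
  rw [show -(N : ℝ) - 2 - d + 1 = -N - d - 1 by ring] at coeff_k coeff_j
  congr 2
  linear_combination
    poch (-(d : ℝ)) j * p ^ (d - j) / j.factorial * poch (-(N : ℝ) - d - 1) (d - j) * coeff_k
      + (-1) ^ d * krawCoeff d (p - 1) (-N - 2) k * coeff_j
      + krawCoeff d p (-N - 2) j * krawCoeff d (p - 1) (-N - 2) k * neg_one_pow_sq (R := ℝ) d

theorem backward_krawAddedState_summand (N k j : ℕ) (p x : ℝ) :
    p * (kraw (N + k + j + 1) p (N + k + j + 1)).eval (x + (k + 1)) +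
        (1 - p) * (kraw (N + k + j + 1) p (N + k + j + 1)).eval (x - 1 + (k + 1)) =
      poch (x + 1) k * ((descPochhammer ℝ (N + 1)).eval x *
        (descPochhammer ℝ j).eval (x - (N + 1))) := by
  have backward := kraw_natCast_backward (N + k + j + 1) p (x + k)
  have blocks := descPochhammer_eval_add_natCast k (N + 1 + j) x
  rw [descPochhammer_eval_add (N + 1) j, show k + (N + 1 + j) = N + k + j + 1 by ring] at blocks
  push_cast at backward blocks
  rw [← blocks, ← backward, add_assoc x, sub_add_add_cancel]

theorem backward_krawAddedState_eval (N d : ℕ) (p x : ℝ) :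
    p * (krawAddedState N d p).eval x + (1 - p) * (krawAddedState N d p).eval (x - 1) =
      (kraw d p (-N - 2)).eval (x - (N + 1)) * (kraw (N + d + 1) p N).eval x := by
  have kraw_factor : (kraw (N + d + 1) p N).eval x =
      (descPochhammer ℝ (N + 1)).eval x * (kraw d p (-N - 2)).eval (x - (N + 1)) := by
    rw [add_right_comm N d 1]
    convert kraw_add_eval_eq_mul p x (N + 1) d using 3 <;> push_cast <;> ring_nf
  have kraw_rising : (kraw d p (-N - 2)).eval (x - (N + 1)) =
      ∑ k ∈ Finset.range (d + 1), krawCoeff d (p - 1) (-N - 2) k * poch (x + 1) k := by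
    convert kraw_eval_eq_sum_poch d p (-N - 2) (x - (N + 1)) using 4
    ring
  rw [kraw_factor]
  nth_rw 1 [kraw_rising]
  rw [kraw_eval_eq_sum_descPochhammer d p (-N - 2), Finset.mul_sum, Finset.sum_mul_sum]
  simp only [krawAddedState_eq_sum_krawCoeff, eval_finsetSum, eval_mul, eval_C, eval_comp,
    eval_add, eval_X]
  simp only [Finset.mul_sum, ← Finset.sum_add_distrib]
  refine Finset.sum_congr rfl fun k _ ↦ Finset.sum_congr rfl fun j _ ↦ ?_
  linear_combination krawCoeff d p (-N - 2) j * krawCoeff d (p - 1) (-N - 2) k *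
    backward_krawAddedState_summand N k j p x

/-- With `q(x) = Σ_{0≤k,j≤d} [(−d)_j (−d)_k (p−1)^{d−k} p^{d−j}/(j! k!)]
(−N−d−1)_{d−j} (−N−d−1)_{d−k} K_{N+k+j+1}(x+k+1;p,N+k+j+1)`, one has
`p q(x) + (1−p) q(x−1) = K_d(x−N−1;p,−N−2) K_{N+d+1}(x;p,N)`; thus `q` is the added state
`K̂_{N+d+1}^{(2,d)}` of the type-2 family. -/
theorem krawtchouk_exceptional2_added_state (N : ℕ) (hN : 1 ≤ N) (p : ℝ) (d : ℕ) :
    Polynomial.C p *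
          (∑ k ∈ Finset.range (d + 1), ∑ j ∈ Finset.range (d + 1),
            Polynomial.C (poch (-(d : ℝ)) j * poch (-(d : ℝ)) k * (p - 1) ^ (d - k) *
                p ^ (d - j) / ((j.factorial : ℝ) * (k.factorial : ℝ)) *
                poch (-(N : ℝ) - d - 1) (d - j) * poch (-(N : ℝ) - d - 1) (d - k)) *
              (kraw (N + k + j + 1) p ((N : ℝ) + k + j + 1)).comp
                (Polynomial.X + Polynomial.C ((k : ℝ) + 1))) +
        Polynomial.C (1 - p) *
          ((∑ k ∈ Finset.range (d + 1), ∑ j ∈ Finset.range (d + 1),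
            Polynomial.C (poch (-(d : ℝ)) j * poch (-(d : ℝ)) k * (p - 1) ^ (d - k) *
                p ^ (d - j) / ((j.factorial : ℝ) * (k.factorial : ℝ)) *
                poch (-(N : ℝ) - d - 1) (d - j) * poch (-(N : ℝ) - d - 1) (d - k)) *
              (kraw (N + k + j + 1) p ((N : ℝ) + k + j + 1)).comp
                (Polynomial.X + Polynomial.C ((k : ℝ) + 1))).comp (Polynomial.X - 1)) =
      (kraw d p (-(N : ℝ) - 2)).comp (Polynomial.X - Polynomial.C ((N : ℝ) + 1)) *
        kraw (N + d + 1) p (N : ℝ) := by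
  rw [← krawAddedState]
  refine Polynomial.funext fun x ↦ ?_
  simpa using backward_krawAddedState_eval N d p x
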